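/- arXiv:2410.06029 — 2 statements merged into one kernel-verified Lean document; each statement's English description precedes it below -/
import Mathlib

section
/- (Perfect security of the quantum one-time pad.) For every n ∈ ℕ and every 2ⁿ×2ⁿ complex matrix ρ, (1/4ⁿ) · Σ_{a,b ∈ {0,1}ⁿ} X^a Z^b ρ (X^a Z^b)† = (tr ρ / 2ⁿ) · I_{2ⁿ}. In particular, when ρ is a density matrix, the quantum one-time pad with uniformly random keys (a,b) maps ρ to the maximally mixed state I_{2ⁿ}/2ⁿ, independently of ρ. -/
/-!
Averaging over the two halves of the key separates: conjugating by a uniformly random `Z^b` kills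
the off-diagonal entries of `ρ`, because the functions `b ↦ (-1)^(b·x)` for distinct `x` are
orthogonal, and conjugating by a uniformly random `X^a` then flattens the remaining diagonal,
because the bit flips `x ↦ x ⊕ a` act simply transitively on bit strings.
-/

open Matrix BigOperators

/-- The `n`-qubit Pauli X operator `X^a` for a bit string `a ∈ {0,1}ⁿ`:
`(X^a)_{x,y} = 1` if `x = y ⊕ a` (bitwise XOR) and `0` otherwise. -/
def PauliX {n : ℕ} (a : Fin n → Bool) :
    Matrix (Fin n → Bool) (Fin n → Bool) ℂ :=
  fun x y => if x = (fun i => xor (y i) (a i)) then 1 else 0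

/-- The `n`-qubit Pauli Z operator `Z^b` for a bit string `b ∈ {0,1}ⁿ`:
the diagonal matrix with `(Z^b)_{x,x} = (−1)^{Σᵢ bᵢ·xᵢ}`. -/
def PauliZ {n : ℕ} (b : Fin n → Bool) :
    Matrix (Fin n → Bool) (Fin n → Bool) ℂ :=
  fun x y => if x = y then (-1 : ℂ) ^ (∑ i, if b i ∧ x i then (1 : ℕ) else 0) else 0

section Twirl

variable {κ m R : Type*} [Fintype κ] [Fintype m] [DecidableEq m]

theorem sum_diagonal_conj_eq_smul_diagonal_diag [CommSemiring R] [StarRing R]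
    {d : κ → m → R} {c : R}
    (hd : ∀ x y, ∑ k, d k x * star (d k y) = if x = y then c else 0) (M : Matrix m m R) :
    ∑ k, diagonal (d k) * M * (diagonal (d k))ᴴ = c • diagonal M.diag := by
  ext x y
  calc (∑ k, diagonal (d k) * M * (diagonal (d k))ᴴ) x y
      = (∑ k, d k x * star (d k y)) * M x y := by
        simp only [diagonal_conjTranspose, Matrix.sum_apply, mul_diagonal, diagonal_mul,
          Pi.star_apply, Finset.sum_mul, mul_right_comm]
    _ = (c • diagonal M.diag) x y := by
        by_cases hxy : x = y <;> simp [hd, hxy]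

theorem permMatrix_conj_diagonal [NonAssocSemiring R] [StarRing R]
    (σ : Equiv.Perm m) (v : m → R) :
    σ.permMatrix R * diagonal v * (σ.permMatrix R)ᴴ = diagonal (v ∘ σ) := by
  rw [conjTranspose_permMatrix, PEquiv.toMatrix_toPEquiv_mul, PEquiv.mul_toMatrix_toPEquiv]
  exact submatrix_diagonal_equiv v σ

theorem sum_permMatrix_conj_diagonal_eq_smul_one [NonAssocSemiring R] [StarRing R]
    {σ : κ → Equiv.Perm m} (hσ : ∀ x, Function.Bijective fun k => σ k x) (v : m → R) :
    ∑ k, (σ k).permMatrix R * diagonal v * ((σ k).permMatrix R)ᴴ =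
      (∑ x, v x) • (1 : Matrix m m R) := by
  have sum_orbit (x : m) : ∑ k, v (σ k x) = ∑ y, v y := (hσ x).sum_comp v
  simp only [permMatrix_conj_diagonal]
  ext x y
  by_cases hxy : x = y <;> simp [Matrix.sum_apply, sum_orbit, hxy]

end Twirl

section BitStrings

variable {ι : Type*}

/-- The bit flip `x ↦ x ⊕ a` as a permutation of bit strings, whose permutation matrix is `X^a`. -/
def bitFlip (a : ι → Bool) : Equiv.Perm (ι → Bool) :=
  Function.Involutive.toPerm (fun x i => xor (x i) (a i)) fun x => by simp

theorem bitFlip_symm (a : ι → Bool) : (bitFlip a).symm = bitFlip a :=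
  Function.Involutive.toPerm_symm _

theorem bitFlip_comm (a x : ι → Bool) : bitFlip a x = bitFlip x a :=
  funext fun i => Bool.xor_comm (x i) (a i)

theorem bijective_bitFlip_apply (x : ι → Bool) : Function.Bijective fun a => bitFlip a x := by
  simpa only [bitFlip_comm _ x] using (bitFlip x).bijective

variable [Fintype ι] {R : Type*} [CommRing R]

/-- The Walsh function `(-1)^(b·x)` on bit strings, the diagonal of `Z^b`. It is written as a
product over the bits so that sums over `b` factor. -/
def walsh (R : Type*) [CommRing R] (b x : ι → Bool) : R :=
  ∏ i, if b i ∧ x i then -1 else 1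

theorem walsh_eq_neg_one_pow (b x : ι → Bool) :
    walsh R b x = (-1) ^ ∑ i, if b i ∧ x i then 1 else 0 := by
  simp only [walsh, ← Finset.prod_pow_eq_pow_sum, pow_ite, pow_one, pow_zero]

theorem star_walsh [StarRing R] (b x : ι → Bool) : star (walsh R b x) = walsh R b x := by
  simp only [walsh, star_prod, apply_ite star, star_neg, star_one]

theorem sum_walsh_mul_walsh [DecidableEq ι] (x y : ι → Bool) :
    ∑ b, walsh R b x * walsh R b y = if x = y then 2 ^ Fintype.card ι else 0 := by
  let sign (c u : Bool) : R := if c ∧ u then -1 else 1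
  have one_bit (u v : Bool) : ∑ c, sign c u * sign c v = if u = v then 2 else 0 := by
    cases u <;> cases v <;> norm_num [sign]
  calc ∑ b, walsh R b x * walsh R b y
      = ∑ b : ι → Bool, ∏ i, sign (b i) (x i) * sign (b i) (y i) := by
        simp only [walsh, sign, Finset.prod_mul_distrib]
    _ = ∏ i, ∑ c, sign c (x i) * sign c (y i) :=
        (Fintype.prod_sum fun i c => sign c (x i) * sign c (y i)).symm
    _ = ∏ i, if x i = y i then 2 else 0 := by simp only [one_bit]
    _ = if x = y then 2 ^ Fintype.card ι else 0 := by
        simp [Finset.prod_ite_zero, funext_iff]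

end BitStrings

section Pauli

variable {n : ℕ}

theorem PauliX_eq_permMatrix (a : Fin n → Bool) : PauliX a = (bitFlip a).permMatrix ℂ := by
  ext x y
  have flip_swap : x = bitFlip a y ↔ bitFlip a x = y := by
    rw [← Equiv.eq_symm_apply, bitFlip_symm]
  simp only [PauliX, PEquiv.toMatrix_apply, Equiv.toPEquiv_apply, Option.mem_some_iff,
    ← flip_swap]
  rfl

theorem PauliZ_eq_diagonal (b : Fin n → Bool) : PauliZ b = diagonal (walsh ℂ b) := by
  ext x y
  simp only [PauliZ, diagonal_apply, walsh_eq_neg_one_pow]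

theorem sum_PauliX_conj_diagonal (v : (Fin n → Bool) → ℂ) :
    ∑ a, PauliX a * diagonal v * (PauliX a)ᴴ = (∑ x, v x) • 1 := by
  simp only [PauliX_eq_permMatrix]
  exact sum_permMatrix_conj_diagonal_eq_smul_one bijective_bitFlip_apply v

theorem sum_PauliZ_conj (ρ : Matrix (Fin n → Bool) (Fin n → Bool) ℂ) :
    ∑ b, PauliZ b * ρ * (PauliZ b)ᴴ = (2 : ℂ) ^ n • diagonal ρ.diag := by
  simp only [PauliZ_eq_diagonal]
  refine sum_diagonal_conj_eq_smul_diagonal_diag (fun x y => ?_) ρ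
  simp only [star_walsh, sum_walsh_mul_walsh, Fintype.card_fin]

end Pauli

/-- Perfect security of the quantum one-time pad: averaging the pad
`ρ ↦ X^a Z^b ρ (X^a Z^b)†` over uniformly random keys `(a,b)` yields
`(tr ρ / 2ⁿ) · I`, independently of `ρ`. -/
theorem qotp_perfect_security (n : ℕ)
    (ρ : Matrix (Fin n → Bool) (Fin n → Bool) ℂ) :
    ((1 : ℂ) / 4 ^ n) •
        ∑ a : Fin n → Bool, ∑ b : Fin n → Bool,
          (PauliX a * PauliZ b) * ρ * (PauliX a * PauliZ b)ᴴ =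
      (ρ.trace / 2 ^ n) • (1 : Matrix (Fin n → Bool) (Fin n → Bool) ℂ) := by
  have twirl : ∑ a : Fin n → Bool, ∑ b : Fin n → Bool,
      (PauliX a * PauliZ b) * ρ * (PauliX a * PauliZ b)ᴴ = ((2 : ℂ) ^ n * ρ.trace) • 1 := calc
    _ = ∑ a : Fin n → Bool, PauliX a * (∑ b, PauliZ b * ρ * (PauliZ b)ᴴ) * (PauliX a)ᴴ := by
      simp only [conjTranspose_mul, Finset.mul_sum, Finset.sum_mul, Matrix.mul_assoc]
    _ = (2 : ℂ) ^ n • ∑ a : Fin n → Bool, PauliX a * diagonal ρ.diag * (PauliX a)ᴴ := by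
      simp only [sum_PauliZ_conj, Matrix.mul_smul, Matrix.smul_mul, Finset.smul_sum]
    _ = ((2 : ℂ) ^ n * ρ.trace) • 1 := by
      rw [sum_PauliX_conj_diagonal, smul_smul, trace]
  have four_pow : (4 : ℂ) ^ n = 2 ^ n * 2 ^ n := by norm_num [← mul_pow]
  rw [twirl, smul_smul, four_pow]
  congr 1
  field_simp
end

section
/- (Correctness of quantum teleportation.) Let |Φ⁺⟩ ∈ ℂ²⊗ℂ² be the EPR vector with coordinates 1/√2 at (0,0) and (1,1) and 0 elsewhere, and for a,b ∈ {0,1} let |Φ_{ab}⟩ := (X^a Z^b ⊗ I₂)|Φ⁺⟩ be the Bell vectors, with X = !![0,1;1,0] and Z = !![1,0;0,−1]. Then for every vector |ψ⟩ ∈ ℂ² and all a,b ∈ {0,1}: (⟨Φ_{ab}| ⊗ I₂)(|ψ⟩ ⊗ |Φ⁺⟩) = (1/2) · Z^b X^a |ψ⟩ as vectors in ℂ² (where ⟨Φ_{ab}| ⊗ I₂ contracts the first two of the three qubit factors). Consequently the squared norm of the projected vector is ‖ψ‖²/4, i.e. each Bell-measurement outcome (a,b) occurs with probability 1/4, and applying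 the Pauli correction X^a Z^b to the receiver's qubit yields (1/2)|ψ⟩, recovering the teleported state up to normalization. -/
open Matrix BigOperators Kronecker

/-- The single-qubit Pauli X matrix. -/
def qX : Matrix (Fin 2) (Fin 2) ℂ := !![0, 1; 1, 0]

/-- The single-qubit Pauli Z matrix. -/
def qZ : Matrix (Fin 2) (Fin 2) ℂ := !![1, 0; 0, -1]

/-- `X^a` for a bit `a ∈ {0,1}`. -/
def qXpow (a : Bool) : Matrix (Fin 2) (Fin 2) ℂ := if a then qX else 1

/-- `Z^b` for a bit `b ∈ {0,1}`. -/
def qZpow (b : Bool) : Matrix (Fin 2) (Fin 2) ℂ := if b then qZ else 1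

/-- The EPR vector `|Φ⁺⟩ ∈ ℂ²⊗ℂ²`: coordinates `1/√2` at `(0,0)` and `(1,1)`,
`0` elsewhere. -/
noncomputable def eprVec : Fin 2 × Fin 2 → ℂ :=
  fun p => if p.1 = p.2 then ((1 / Real.sqrt 2 : ℝ) : ℂ) else 0

/-- The Bell vector `|Φ_{ab}⟩ := (X^a Z^b ⊗ I₂)|Φ⁺⟩`. -/
noncomputable def bellVec (a b : Bool) : Fin 2 × Fin 2 → ℂ :=
  ((qXpow a * qZpow b) ⊗ₖ (1 : Matrix (Fin 2) (Fin 2) ℂ)).mulVec eprVec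

/-- The contraction `(⟨Φ_{ab}| ⊗ I₂) v` of a three-qubit vector `v` against the
Bell vector `|Φ_{ab}⟩` on the first two qubit factors:
`k ↦ Σ_{i,j} conj(Φ_{ab})_{(i,j)} · v_{(i,j,k)}`. -/
noncomputable def bellContract (a b : Bool) (v : Fin 2 × Fin 2 × Fin 2 → ℂ) :
    Fin 2 → ℂ :=
  fun k => ∑ i : Fin 2, ∑ j : Fin 2, (starRingEnd ℂ) (bellVec a b (i, j)) * v (i, j, k)

/-!
Identifying `ℂᵈ ⊗ ℂᵈ` with matrices turns the maximally entangled vector `Φ` into `d^(-1/2) I`, the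
Bell vector `(U ⊗ I) Φ` into `d^(-1/2) Uᵀ`, and the contraction of the first two tensor factors into
a matrix product, which leaves `d⁻¹ Uᴴ ψ` on the third factor. For unitary `U` this has norm
`d⁻¹ ‖ψ‖`, and applying `U` recovers `d⁻¹ ψ`. Teleportation of a qubit is the case `U = X^a Z^b`.
-/

section PartialInner

variable {l m n R : Type*} [Fintype l] [Fintype m]

/-- The partial inner product `(⟨φ| ⊗ I) v`, which contracts `v` against `φ` on the first two tensor
factors and is conjugate-linear in `φ`. -/
def partialInner [Mul R] [AddCommMonoid R] [Star R] (φ : l × m → R) (v : l × m × n → R) : n → R :=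
  fun k => ∑ i, ∑ j, star (φ (i, j)) * v (i, j, k)

theorem partialInner_vec_mul_vec [NonUnitalCommSemiring R] [Star R]
    (A : Matrix m l R) (B : Matrix n m R) (ψ : l → R) :
    partialInner (vec A) (fun p => ψ p.1 * vec B p.2) = (B * A.map star) *ᵥ ψ := by
  ext k
  simp only [partialInner, vec, mulVec, dotProduct, mul_apply, map_apply, Finset.sum_mul]
  exact Finset.sum_congr rfl fun i _ => Finset.sum_congr rfl fun j _ => by
    rw [mul_comm (B k j), mul_assoc, mul_comm (B k j)]

theorem partialInner_kronecker_one_mulVec_vec {o : Type*} [Fintype o] [DecidableEq m]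
    [CommSemiring R] [StarRing R] (A : Matrix l o R) (X : Matrix m o R) (Y : Matrix n m R)
    (ψ : l → R) :
    partialInner ((A ⊗ₖ (1 : Matrix m m R)) *ᵥ vec X) (fun p => ψ p.1 * vec Y p.2) =
      (Y * X.map star * Aᴴ) *ᵥ ψ := by
  have hStar : (X * Aᵀ).map star = X.map star * Aᴴ := Matrix.map_mul (f := starRingEnd R)
  rw [kronecker_mulVec_vec, Matrix.one_mul, partialInner_vec_mul_vec, hStar, Matrix.mul_assoc]

end PartialInner

section MaxEntangled

variable {m n 𝕜 : Type*} [RCLike 𝕜] [Fintype n] [DecidableEq n]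

theorem sum_norm_sq_mulVec_of_conjTranspose_mul_self_eq_one [Fintype m] {A : Matrix m n 𝕜}
    (hA : Aᴴ * A = 1) (v : n → 𝕜) : ∑ i, ‖(A *ᵥ v) i‖ ^ 2 = ∑ i, ‖v i‖ ^ 2 := by
  have h : star (A *ᵥ v) ⬝ᵥ (A *ᵥ v) = star v ⬝ᵥ v := by
    rw [star_mulVec, ← dotProduct_mulVec, mulVec_mulVec, hA, one_mulVec]
  simp only [dotProduct, Pi.star_apply, RCLike.star_def, RCLike.conj_mul] at h
  exact_mod_cast h

variable (n 𝕜) in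
/-- The maximally entangled vector `d^(-1/2) ∑ᵢ eᵢ ⊗ eᵢ` in dimension `d = card n`, encoded as the
vectorization of a scalar matrix. -/
noncomputable def maxEntangledVec : n × n → 𝕜 :=
  vec ((((√(Fintype.card n))⁻¹ : ℝ) : 𝕜) • (1 : Matrix n n 𝕜))

theorem partialInner_maxEntangledVec [Fintype m] (A : Matrix m n 𝕜) (ψ : m → 𝕜) :
    partialInner ((A ⊗ₖ (1 : Matrix n n 𝕜)) *ᵥ maxEntangledVec n 𝕜)
        (fun p => ψ p.1 * maxEntangledVec n 𝕜 p.2) =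
      (1 / (Fintype.card n : 𝕜)) • Aᴴ *ᵥ ψ := by
  have hc : (((√(Fintype.card n))⁻¹ : ℝ) : 𝕜) * (((√(Fintype.card n))⁻¹ : ℝ) : 𝕜) =
      1 / (Fintype.card n : 𝕜) := by
    rw [← RCLike.ofReal_mul, ← mul_inv, Real.mul_self_sqrt (Nat.cast_nonneg _), one_div,
      RCLike.ofReal_inv, RCLike.ofReal_natCast]
  have hStar : ((((√(Fintype.card n))⁻¹ : ℝ) : 𝕜) • (1 : Matrix n n 𝕜)).map star =
      (((√(Fintype.card n))⁻¹ : ℝ) : 𝕜) • 1 := by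
    rw [smul_one_eq_diagonal, diagonal_map (star_zero _), RCLike.star_def, RCLike.conj_ofReal]
  rw [maxEntangledVec, partialInner_kronecker_one_mulVec_vec, hStar, smul_mul_smul_comm, hc,
    Matrix.one_mul, smul_mul, Matrix.one_mul, smul_mulVec]

theorem teleportation_correct_general {U : Matrix n n 𝕜} (hU : U ∈ unitaryGroup n 𝕜) (ψ : n → 𝕜) :
    partialInner ((U ⊗ₖ (1 : Matrix n n 𝕜)) *ᵥ maxEntangledVec n 𝕜)
          (fun p => ψ p.1 * maxEntangledVec n 𝕜 p.2) =
        (1 / (Fintype.card n : 𝕜)) • Uᴴ *ᵥ ψ ∧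
      ∑ k, ‖partialInner ((U ⊗ₖ (1 : Matrix n n 𝕜)) *ᵥ maxEntangledVec n 𝕜)
          (fun p => ψ p.1 * maxEntangledVec n 𝕜 p.2) k‖ ^ 2 =
        (∑ i, ‖ψ i‖ ^ 2) / (Fintype.card n : ℝ) ^ 2 ∧
      U *ᵥ ((1 / (Fintype.card n : 𝕜)) • Uᴴ *ᵥ ψ) = (1 / (Fintype.card n : 𝕜)) • ψ := by
  have hUU : U * Uᴴ = 1 := mem_unitaryGroup_iff.mp hU
  have hnorm : ∑ i, ‖(Uᴴ *ᵥ ψ) i‖ ^ 2 = ∑ i, ‖ψ i‖ ^ 2 :=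
    sum_norm_sq_mulVec_of_conjTranspose_mul_self_eq_one (by rwa [conjTranspose_conjTranspose]) ψ
  refine ⟨partialInner_maxEntangledVec U ψ, ?_, ?_⟩
  · simp only [partialInner_maxEntangledVec, Pi.smul_apply, norm_smul, mul_pow, ← Finset.mul_sum,
      hnorm, norm_inv, RCLike.norm_natCast, one_div, inv_pow]
    rw [inv_mul_eq_div]
  · rw [mulVec_smul, mulVec_mulVec, hUU, one_mulVec]

end MaxEntangled

theorem isHermitian_qXpow (a : Bool) : (qXpow a).IsHermitian := by
  cases a
  · exact isHermitian_one
  · ext i j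
    fin_cases i <;> fin_cases j <;> simp [qXpow, qX]

theorem isHermitian_qZpow (b : Bool) : (qZpow b).IsHermitian := by
  cases b
  · exact isHermitian_one
  · ext i j
    fin_cases i <;> fin_cases j <;> simp [qZpow, qZ]

theorem qXpow_mem_unitaryGroup (a : Bool) : qXpow a ∈ unitaryGroup (Fin 2) ℂ := by
  rw [mem_unitaryGroup_iff, star_eq_conjTranspose, isHermitian_qXpow]
  cases a <;> simp [qXpow, qX, one_fin_two]

theorem qZpow_mem_unitaryGroup (b : Bool) : qZpow b ∈ unitaryGroup (Fin 2) ℂ := by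
  rw [mem_unitaryGroup_iff, star_eq_conjTranspose, isHermitian_qZpow]
  cases b <;> simp [qZpow, qZ, one_fin_two]

theorem conjTranspose_qXpow_mul_qZpow (a b : Bool) :
    (qXpow a * qZpow b)ᴴ = qZpow b * qXpow a := by
  rw [conjTranspose_mul, isHermitian_qXpow, isHermitian_qZpow]

theorem eprVec_eq_maxEntangledVec : eprVec = maxEntangledVec (Fin 2) ℂ := by
  ext ⟨i, j⟩
  simp [eprVec, maxEntangledVec, one_apply, eq_comm]

theorem bellContract_eq_partialInner (a b : Bool) : bellContract a b = partialInner (bellVec a b) :=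
  rfl

/-- Correctness of quantum teleportation: projecting `|ψ⟩ ⊗ |Φ⁺⟩` onto the Bell
vector `|Φ_{ab}⟩` on the first two qubits leaves `(1/2)·Z^b X^a |ψ⟩` on the third
qubit; each outcome `(a,b)` occurs with probability `1/4` (the squared norm of the
projected vector is `‖ψ‖²/4`); and applying the Pauli correction `X^a Z^b`
recovers `(1/2)|ψ⟩`. -/
theorem teleportation_correct (ψ : Fin 2 → ℂ) (a b : Bool) :
    bellContract a b (fun p => ψ p.1 * eprVec p.2) =
        ((1 : ℂ) / 2) • (qZpow b * qXpow a).mulVec ψ ∧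
      (∑ k : Fin 2, Complex.normSq (bellContract a b (fun p => ψ p.1 * eprVec p.2) k)) =
        (∑ i : Fin 2, Complex.normSq (ψ i)) / 4 ∧
      (qXpow a * qZpow b).mulVec (((1 : ℂ) / 2) • (qZpow b * qXpow a).mulVec ψ) =
        ((1 : ℂ) / 2) • ψ := by
  have hUnitary := mul_mem (qXpow_mem_unitaryGroup a) (qZpow_mem_unitaryGroup b)
  have hsq : (2 : ℝ) ^ 2 = 4 := by norm_num
  simpa only [bellContract_eq_partialInner, bellVec, eprVec_eq_maxEntangledVec,
    conjTranspose_qXpow_mul_qZpow, ← Complex.normSq_eq_norm_sq, Fintype.card_fin, Nat.cast_ofNat,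
    hsq] using teleportation_correct_general hUnitary ψ
end
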